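/- Let L be a finite-dimensional complex semisimple Lie algebra with Cartan subalgebra H, and let Δ be the set of roots of L with respect to H (nonzero functionals α on H with root space g^α ≠ {0}). Let λ : L → ℂ be a linear functional that vanishes on g^α for every α ∈ Δ. Then {X ∈ L | λ([X, Y]) = 0 for all Y ∈ L} = H ⊕ Σ_{β ∈ Δ_sing} g^β, where Δ_sing := {β ∈ Δ | λ([x, y]) = 0 for all x ∈ g^β and y ∈ g^{−β}}. -/

import Mathlib

open LieAlgebra LieModule

section

variable {L : Type*} [LieRing L] [LieAlgebra ℂ L] {H : LieSubalgebra ℂ L}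

/-- A linear functional vanishing on all root spaces annihilates `⁅g^α, g^β⁆` when `α + β ≠ 0`. -/
lemma apply_lie_eq_zero_of_mem_rootSpace_of_add_ne_zero [LieRing.IsNilpotent H] {lam : L →ₗ[ℂ] ℂ}
    (hlam : ∀ α : H →ₗ[ℂ] ℂ, α ≠ 0 → rootSpace H (α : H → ℂ) ≠ ⊥ →
      ∀ x ∈ rootSpace H (α : H → ℂ), lam x = 0)
    {α β : H →ₗ[ℂ] ℂ} {x y : L} (hx : x ∈ rootSpace H (α : H → ℂ))
    (hy : y ∈ rootSpace H (β : H → ℂ)) (h : α + β ≠ 0) : lam ⁅x, y⁆ = 0 := by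
  have hxy : ⁅x, y⁆ ∈ rootSpace H ((α + β : H →ₗ[ℂ] ℂ) : H → ℂ) :=
    lie_mem_genWeightSpace_of_mem_genWeightSpace hx hy
  by_cases hb : rootSpace H ((α + β : H →ₗ[ℂ] ℂ) : H → ℂ) = ⊥
  · rw [hb, LieSubmodule.mem_bot] at hxy
    rw [hxy, map_zero]
  · exact hlam _ h hb _ hxy

/-- Each element of `L` is a sum of components in the weight spaces of
a Cartan subalgebra. -/
lemma exists_sum_mem_rootSpace_eq [FiniteDimensional ℂ L] [LieRing.IsNilpotent H] (X : L) :
    ∃ f : Weight ℂ H L → L, (∀ α : Weight ℂ H L, f α ∈ rootSpace H α) ∧ ∑ α, f α = X := by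
  have hX : X ∈ ⨆ α : Weight ℂ H L, (rootSpace H α).toSubmodule := by
    rw [← LieSubmodule.iSup_toSubmodule, iSup_genWeightSpace_eq_top']
    trivial
  obtain ⟨f, hf, rfl⟩ := (Submodule.mem_iSup_iff_exists_finsupp _ _).mp hX
  exact ⟨f, hf, (Finsupp.sum_fintype f (fun _ x ↦ x) fun _ ↦ rfl).symm⟩

/-- A linear functional vanishes on `⁅X, L⁆` as soon as it vanishes on the brackets of `X` with all
elements of weight spaces. -/
lemma apply_lie_eq_zero_of_forall_rootSpace [FiniteDimensional ℂ L] [LieRing.IsNilpotent H]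
    {lam : L →ₗ[ℂ] ℂ} {X : L} (h : ∀ α : Weight ℂ H L, ∀ y ∈ rootSpace H α, lam ⁅X, y⁆ = 0) (Y : L) : lam ⁅X, Y⁆ = 0 := by
  obtain ⟨f, hf, rfl⟩ := exists_sum_mem_rootSpace_eq (H := H) Y
  rw [lie_sum, map_sum]
  exact Finset.sum_eq_zero fun α _ ↦ h α _ (hf α)

end

/-- Let `H` be a Cartan subalgebra of a finite-dimensional complex semisimple
Lie algebra `L` and let `λ : L → ℂ` be a linear functional vanishing on every root space.
Then `{X | λ [X, Y] = 0 for all Y} = H ⊕ Σ_{β ∈ Δ_sing} g^β`, where `Δ_sing` is the set of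
roots `β` with `λ ([g^β, g^{-β}]) = 0` (the singular roots of `λ`). -/
theorem coadjoint_stabilizer_eq_cartan_sup_singular_rootSpaces
    {L : Type*} [LieRing L] [LieAlgebra ℂ L] [FiniteDimensional ℂ L]
    [LieAlgebra.IsSemisimple ℂ L]
    (H : LieSubalgebra ℂ L) [H.IsCartanSubalgebra]
    (lam : L →ₗ[ℂ] ℂ)
    (hlam : ∀ α : H →ₗ[ℂ] ℂ, α ≠ 0 → LieAlgebra.rootSpace H (α : H → ℂ) ≠ ⊥ →
      ∀ x ∈ LieAlgebra.rootSpace H (α : H → ℂ), lam x = 0)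
    (Δsing : Set (H →ₗ[ℂ] ℂ))
    (hΔsing : ∀ β : H →ₗ[ℂ] ℂ, β ∈ Δsing ↔
      β ≠ 0 ∧ LieAlgebra.rootSpace H (β : H → ℂ) ≠ ⊥ ∧
        ∀ x ∈ LieAlgebra.rootSpace H (β : H → ℂ),
          ∀ y ∈ LieAlgebra.rootSpace H ((-β : H →ₗ[ℂ] ℂ) : H → ℂ), lam ⁅x, y⁆ = 0) :
    {X : L | ∀ Y : L, lam ⁅X, Y⁆ = 0} =
      ((H.toSubmodule ⊔ ⨆ β ∈ Δsing, (LieAlgebra.rootSpace H (β : H → ℂ)).toSubmodule :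
        Submodule ℂ L) : Set L) := by
  have coe_lin (α : Weight ℂ H L) : ((α.toLinear : H →ₗ[ℂ] ℂ) : H → ℂ) = α := rfl
  have mem_zero {x : L} : x ∈ rootSpace H ((0 : H →ₗ[ℂ] ℂ) : H → ℂ) ↔ x ∈ H := by
    rw [show ((0 : H →ₗ[ℂ] ℂ) : H → ℂ) = 0 from rfl, rootSpace_zero_eq,
      LieSubalgebra.mem_toLieSubmodule]
  apply Set.Subset.antisymm
  · intro X hX
    obtain ⟨f, hf, rfl⟩ := exists_sum_mem_rootSpace_eq (H := H) X
    refine Submodule.sum_mem _ fun α _ ↦ ?_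
    by_cases hα0 : α.toLinear = 0
    · have := hf α
      rw [← coe_lin, hα0, mem_zero] at this
      exact Submodule.mem_sup_left this
    by_cases hα : α.toLinear ∈ Δsing
    · exact Submodule.mem_sup_right <|
        Submodule.mem_iSup_of_mem _ (Submodule.mem_iSup_of_mem hα (hf α))
    have hns := (hΔsing _).not.mp hα
    have hne : rootSpace H (α.toLinear : H → ℂ) ≠ ⊥ := α.genWeightSpace_ne_bot
    push Not at hns
    obtain ⟨x, hx, y, hy, hxy⟩ := hns hα0 hne
    have hx0 : (⟨x, hx⟩ : rootSpace H α) ≠ 0 := by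
      rintro h
      apply hxy
      rw [show x = 0 from congrArg Subtype.val h, zero_lie, map_zero]
    have hα0' : α.IsNonZero := fun h ↦ hα0 (by ext z; exact congrFun h z)
    obtain ⟨c, hc⟩ := (finrank_eq_one_iff_of_nonzero' _ hx0).mp
      (IsKilling.finrank_rootSpace_eq_one α hα0') ⟨f α, hf α⟩
    replace hc : c • x = f α := congrArg Subtype.val hc
    have key : lam ⁅f α, y⁆ = 0 := by
      have h := hX y
      rwa [sum_lie, map_sum, Finset.sum_eq_single α _ (by simp)] at h
      intro γ _ hγ
      refine apply_lie_eq_zero_of_mem_rootSpace_of_add_ne_zero hlam (α := γ.toLinear) (hf γ) hy ?_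
      rw [← sub_eq_add_neg, sub_ne_zero]
      exact fun h ↦ hγ (Weight.ext fun z ↦ LinearMap.congr_fun h z)
    rw [← hc, smul_lie, map_smul, smul_eq_mul, mul_eq_zero, or_iff_left hxy] at key
    rw [← hc, key, zero_smul]
    exact Submodule.zero_mem _
  · let S : Submodule ℂ L :=
      LinearMap.ker (LinearMap.compr₂ (LieModule.toEnd ℂ L L : L →ₗ[ℂ] L →ₗ[ℂ] L) lam)
    have hS (X : L) : X ∈ S ↔ ∀ Y, lam ⁅X, Y⁆ = 0 := by
      simp [S, LinearMap.ext_iff]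
    suffices H.toSubmodule ⊔ ⨆ β ∈ Δsing, (rootSpace H (β : H → ℂ)).toSubmodule ≤ S from
      fun X hX ↦ (hS X).mp (this hX)
    refine sup_le ?_ (iSup₂_le fun β hβ ↦ ?_)
    · intro X hX
      refine (hS X).mpr (apply_lie_eq_zero_of_forall_rootSpace (H := H) fun α y hy ↦ ?_)
      by_cases hα0 : α.toLinear = 0
      · rw [← coe_lin, hα0, mem_zero] at hy
        have : ⁅(⟨X, hX⟩ : H), (⟨y, hy⟩ : H)⁆ = 0 := trivial_lie_zero _ _ _ _
        rw [show ⁅X, y⁆ = 0 from congrArg Subtype.val this, map_zero]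
      · exact apply_lie_eq_zero_of_mem_rootSpace_of_add_ne_zero hlam (α := 0) (β := α.toLinear)
          (mem_zero.mpr hX) hy (by rwa [zero_add])
    · intro X hX
      refine (hS X).mpr (apply_lie_eq_zero_of_forall_rootSpace (H := H) fun α y hy ↦ ?_)
      by_cases h : β + α.toLinear = 0
      · rw [← coe_lin, eq_neg_of_add_eq_zero_right h] at hy
        exact ((hΔsing β).mp hβ).2.2 X hX y hy
      · exact apply_lie_eq_zero_of_mem_rootSpace_of_add_ne_zero hlam hX (β := α.toLinear) hy h
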